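/- Let p₁ ≡ 7 (mod 8) be a prime, let m ≥ 1, set N = 2p₁^m, and let p ≡ 1 (mod 4) be a prime with f := ord_N(p) = φ(N)/2. Let s be an odd positive integer and set q = p^{fs}. Let γ be any primitive element of F_q, let C_i = γ^i⟨γ^N⟩ (0 ≤ i ≤ N−1) be the cyclotomic classes of order N of F_q, let I ⊆ {0, 1, …, N−1} be any subset such that reduction modulo p₁^m maps I bijectively onto Z_{p₁^m}, and let D = ⋃_{i∈I} C_i. Then D is a Paley type partial difference set in the additive group of F_q. -/

import Mathlib

open scoped Classical

/-- The cyclotomic class `C_i = γ^i ⟨γ^N⟩ = {γ^{i+Nk} : k ∈ ℤ}` of order `N` of a finite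
field, with respect to the primitive element `γ`. -/
def cycClass {F : Type*} [Field F] (γ : Fˣ) (N i : ℕ) : Set F :=
  {x : F | ∃ k : ℤ, x = ((γ ^ ((i : ℤ) + (N : ℤ) * k) : Fˣ) : F)}

/-- `D` is a Paley type partial difference set in the finite abelian group `(G, +)` of
order `v`: `0 ∉ D`, `-D = D`, and every nonzero `g ∈ G` has exactly `(v-5)/4` resp.
`(v-1)/4` representations `g = d₁ - d₂` with `d₁, d₂ ∈ D`, according as `g ∈ D` or
`g ∉ D`. -/
def IsPaleyTypePDS {G : Type*} [AddCommGroup G] [Fintype G] (D : Set G) : Prop :=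
  (0 : G) ∉ D ∧ (∀ g : G, -g ∈ D ↔ g ∈ D) ∧
    ∀ g : G, g ≠ 0 →
      (g ∈ D → 4 * Nat.card {x : G × G // x.1 ∈ D ∧ x.2 ∈ D ∧ x.1 - x.2 = g} + 5 =
        Fintype.card G) ∧
      (g ∉ D → 4 * Nat.card {x : G × G // x.1 ∈ D ∧ x.2 ∈ D ∧ x.1 - x.2 = g} + 1 =
        Fintype.card G)

/-!
Write `P = p₁ ^ m` and `N = 2P`, let `η` be the quadratic character and let `H` be the function on
`F` that is `1` on `D`, `-1` on the rest of `Fˣ` and `0` at `0`. Since adding `P` interchanges the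
two classes modulo `2P` above a class modulo `P`, multiplication by `γ ^ P` negates `H`, so only the
multiplicative characters `ψ η` with `ψ ^ P = 1` occur in `H`. The powers of `p` modulo `P` contain
all squares, hence `2` because `p₁ ≡ 7 (mod 8)`; since `2 ≡ p ^ j (mod P)`, Frobenius invariance
gives `g(ψ²) = g(ψ)` and `ψ(2) = 1`, and the Hasse–Davenport formula `ψ(4) g(ψ) g(ψ η) = g(ψ²) g(η)`
collapses to `g(ψ η) = g(η)`. All Gauss sums that matter thus coincide, and the additive Fourier
transform of `H` is `a ↦ g(η) H(a⁻¹)`. Because `g(η)² = |F|`, the autocorrelation of `H` transforms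
to `|F|` on `Fˣ` and `0` at `0`, i.e. it is constantly `-1` off `0`, which is the Paley property of
`D`.
-/

section QuadraticCharacter

variable {F : Type*} [Field F] [Fintype F]

/-- The quadratic character `η` of a finite field `F`, with values in an arbitrary commutative
ring `R` instead of `ℤ`, so that it can be multiplied with other `R`-valued characters. -/
noncomputable def quadraticCharTo (F R : Type*) [Field F] [Fintype F] [CommRing R] :
    MulChar F R :=
  (quadraticChar F).ringHomComp (Int.castRingHom R)

section CommRing

variable {R : Type*} [CommRing R]

lemma quadraticCharTo_apply (x : F) : quadraticCharTo F R x = (quadraticChar F x : ℤ) := rfl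

lemma quadraticCharTo_isQuadratic : (quadraticCharTo F R).IsQuadratic :=
  (quadraticChar_isQuadratic F).comp _

lemma quadraticCharTo_ne_one [CharZero R] (hF : ringChar F ≠ 2) : quadraticCharTo F R ≠ 1 :=
  (MulChar.ringHomComp_ne_one_iff Int.cast_injective).mpr (quadraticChar_ne_one hF)

lemma quadraticCharTo_generator (hF : ringChar F ≠ 2) {γ : Fˣ}
    (hγ : ∀ x : Fˣ, x ∈ Subgroup.zpowers γ) : quadraticCharTo F R γ = -1 := by
  have hne : quadraticChar F γ ≠ 1 := fun h ↦ quadraticChar_ne_one hF <|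
    (MulChar.eq_iff hγ _ _).mpr <| h.trans (MulChar.one_apply_coe γ).symm
  rw [quadraticCharTo_apply, (quadraticChar_dichotomy γ.ne_zero).resolve_left hne]
  simp

lemma quadraticCharTo_neg_one (hq : Fintype.card F % 4 = 1) : quadraticCharTo F R (-1) = 1 := by
  have hF : ringChar F ≠ 2 := fun h ↦ by
    have := FiniteField.even_card_of_char_two h
    lia
  rw [quadraticCharTo_apply, quadraticChar_neg_one hF, ZMod.χ₄_nat_one_mod_four hq, Int.cast_one]

lemma sum_comp_sq (hF : ringChar F ≠ 2) (f : F → R) :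
    ∑ y, f (y ^ 2) = ∑ z, (quadraticCharTo F R z + 1) * f z := by
  rw [← Finset.sum_fiberwise' Finset.univ (fun y : F ↦ y ^ 2)]
  refine Finset.sum_congr rfl fun z _ ↦ ?_
  have hcard : (Finset.card {y : F | y ^ 2 = z} : ℤ) = quadraticChar F z + 1 := by
    rw [← quadraticChar_card_sqrts hF z]
    congr 2
    ext
    simp
  rw [Finset.sum_const, nsmul_eq_mul, quadraticCharTo_apply, ← Int.cast_natCast, hcard]
  push_cast
  rfl

-- Substituting `y = 2x - 1` turns `4x(1 - x)` into `1 - y²`.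
lemma apply_four_mul_jacobiSum_self [IsDomain R] (hF : ringChar F ≠ 2) {ψ : MulChar F R}
    (hψ : ψ ≠ 1) : ψ 4 * jacobiSum ψ ψ = jacobiSum (quadraticCharTo F R) ψ := by
  have hbij : Function.Bijective fun x : F ↦ 2 * x - 1 :=
    ((Equiv.mulLeft₀ (2 : F) (Ring.two_ne_zero hF)).trans (Equiv.subRight 1)).bijective
  have hsum : ∑ z, ψ (1 - z) = 0 :=
    (Equiv.sum_comp (Equiv.subLeft (1 : F)) ψ).trans (MulChar.sum_eq_zero_of_ne_one hψ)
  calc ψ 4 * jacobiSum ψ ψ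
      = ∑ x, ψ (1 - (2 * x - 1) ^ 2) := by
        rw [jacobiSum, Finset.mul_sum]
        refine Finset.sum_congr rfl fun x _ ↦ ?_
        rw [← map_mul, ← map_mul]
        ring_nf
    _ = ∑ y, ψ (1 - y ^ 2) := hbij.sum_comp fun y ↦ ψ (1 - y ^ 2)
    _ = ∑ z, (quadraticCharTo F R z + 1) * ψ (1 - z) := sum_comp_sq hF fun z ↦ ψ (1 - z)
    _ = jacobiSum (quadraticCharTo F R) ψ := by
        simp only [add_mul, one_mul, Finset.sum_add_distrib, hsum, add_zero, jacobiSum]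

end CommRing

-- The Hasse–Davenport product formula for the exponent `2`.
lemma apply_four_mul_gaussSum_mul_gaussSum {R : Type*} [Field R]
    (hcard : (Fintype.card F : R) ≠ 0) (hF : ringChar F ≠ 2) {e : AddChar F R}
    (he : e.IsPrimitive) {ψ : MulChar F R} (hψ : ψ ^ 2 ≠ 1) :
    ψ 4 * gaussSum ψ e * gaussSum (ψ * quadraticCharTo F R) e =
      gaussSum (ψ ^ 2) e * gaussSum (quadraticCharTo F R) e := by
  set η := quadraticCharTo F R
  have hψ_ne : ψ ≠ 1 := by
    rintro rfl
    exact hψ (one_pow 2)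
  have hηψ_ne : η * ψ ≠ 1 := fun h ↦ hψ <| by
    have := congrArg (· ^ 2) h
    simpa only [mul_pow, quadraticCharTo_isQuadratic.sq_eq_one, one_mul, one_pow, η] using this
  have hψψ : gaussSum (ψ ^ 2) e * jacobiSum ψ ψ = gaussSum ψ e * gaussSum ψ e := by
    rw [sq] at hψ ⊢
    exact jacobiSum_mul_nontrivial hψ e
  have hηψ : gaussSum (ψ * η) e * jacobiSum η ψ = gaussSum η e * gaussSum ψ e :=
    mul_comm η ψ ▸ jacobiSum_mul_nontrivial hηψ_ne e
  have hdup : ψ 4 * jacobiSum ψ ψ = jacobiSum η ψ := apply_four_mul_jacobiSum_self hF hψ_ne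
  refine mul_left_cancel₀ (gaussSum_ne_zero_of_nontrivial hcard hψ_ne he) ?_
  linear_combination -ψ 4 * gaussSum (ψ * η) e * hψψ + gaussSum (ψ ^ 2) e * hηψ +
    gaussSum (ψ ^ 2) e * gaussSum (ψ * η) e * hdup

end QuadraticCharacter

section Frobenius

variable {F : Type*} [Field F] {p j P : ℕ} [Fact p.Prime] [CharP F p]

lemma exists_isPrimitive_forall_apply_pow_char [Finite F] :
    ∃ e : AddChar F ℂ, e.IsPrimitive ∧ ∀ x, e (x ^ p) = e x := by
  let _ := ZMod.algebra F p
  let e : AddChar F ℂ :=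
    (ZMod.stdAddChar (N := p)).compAddMonoidHom (Algebra.trace (ZMod p) F).toAddMonoidHom
  have he (x : F) : e x = ZMod.stdAddChar (Algebra.trace (ZMod p) F x) := rfl
  refine ⟨e, AddChar.IsPrimitive.of_ne_one ?_, fun x ↦ ?_⟩
  · obtain ⟨x, hx⟩ := Algebra.trace_surjective (ZMod p) F 1
    refine AddChar.ne_one_iff.mpr ⟨x, ?_⟩
    rw [he, hx, ← AddChar.map_zero_eq_one (ZMod.stdAddChar (N := p))]
    exact ZMod.injective_stdAddChar.ne one_ne_zero
  · rw [he, he,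
      ← Algebra.trace_eq_of_algEquiv (FiniteField.frobeniusAlgEquivOfAlgebraic (ZMod p) F) x,
      FiniteField.coe_frobeniusAlgEquivOfAlgebraic, ZMod.card]

lemma gaussSum_pow_char_pow [Fintype F] {R : Type*} [CommRing R] {e : AddChar F R}
    (he : ∀ x, e (x ^ p) = e x) (ψ : MulChar F R) (j : ℕ) :
    gaussSum (ψ ^ p ^ j) e = gaussSum ψ e := by
  induction j with
  | zero => rw [pow_zero, pow_one]
  | succ j ih =>
    have hp : p ≠ 0 := NeZero.ne p
    have hbij : Function.Bijective fun x : F ↦ x ^ p :=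
      Finite.injective_iff_bijective.mp (frobenius_inj F p)
    rw [← ih, pow_succ, pow_mul]
    refine Fintype.sum_bijective _ hbij _ _ fun x ↦ ?_
    rw [he, MulChar.pow_apply' _ hp, map_pow]

-- Since `2` lies in the prime field, `ψ(2)² = ψ(2 ^ p ^ j) = ψ(2)`.
lemma mulChar_two_eq_one (hp : p ≠ 2) {R : Type*} [CommRing R] [IsDomain R] {ψ : MulChar F R}
    (hψ : ψ ^ P = 1) (hj : p ^ j ≡ 2 [MOD P]) : ψ 2 = 1 := by
  have h2 : (2 : F) ≠ 0 := Ring.two_ne_zero (ringChar.eq F p ▸ hp)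
  have hfrob : (2 : F) ^ p ^ j = 2 := by
    simpa only [iterateFrobenius_def] using map_ofNat (iterateFrobenius F p j) 2
  have hsq : ψ 2 * ψ 2 = ψ 2 := by
    rw [← sq, ← MulChar.pow_apply' _ two_ne_zero, pow_eq_pow_of_modEq hj.symm hψ,
      MulChar.pow_apply' _ (pow_ne_zero _ (NeZero.ne p)), ← map_pow, hfrob]
  exact (mul_eq_right₀ (MulChar.apply_ne_zero_iff.mpr h2.isUnit)).mp hsq

theorem gaussSum_mul_quadraticCharTo [Fintype F] {R : Type*} [Field R]
    (hcard : (Fintype.card F : R) ≠ 0) (hp : p ≠ 2) (hP : Odd P) (hj : p ^ j ≡ 2 [MOD P])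
    {e : AddChar F R} (he : e.IsPrimitive) (hep : ∀ x, e (x ^ p) = e x)
    {ψ : MulChar F R} (hψ : ψ ^ P = 1) :
    gaussSum (ψ * quadraticCharTo F R) e = gaussSum (quadraticCharTo F R) e := by
  rcases eq_or_ne ψ 1 with rfl | hψ_ne
  · rw [one_mul]
  have hψ_sq : ψ ^ 2 ≠ 1 := fun h ↦ hψ_ne <| by
    rw [← orderOf_eq_one_iff]
    exact Nat.eq_one_of_dvd_coprimes hP.coprime_two_left (orderOf_dvd_of_pow_eq_one h)
      (orderOf_dvd_of_pow_eq_one hψ)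
  have hψ4 : ψ 4 = 1 := by
    rw [show (4 : F) = 2 * 2 by norm_num, map_mul, mulChar_two_eq_one hp hψ hj, one_mul]
  have hfrob : gaussSum (ψ ^ 2) e = gaussSum ψ e := by
    rw [pow_eq_pow_of_modEq hj.symm hψ, gaussSum_pow_char_pow hep]
  have hprod := apply_four_mul_gaussSum_mul_gaussSum hcard (ringChar.eq F p ▸ hp) he hψ_sq
  rw [hψ4, one_mul, hfrob] at hprod
  exact mul_left_cancel₀ (gaussSum_ne_zero_of_nontrivial hcard hψ_ne he) hprod

end Frobenius

section FourierUniqueness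

variable {R : Type*} [CommRing R] [IsDomain R]

section Multiplicative

variable {M : Type*} [CommMonoid M]

lemma sum_mulChar_apply_eq_zero [Finite M] [HasEnoughRootsOfUnity R (Monoid.exponent Mˣ)]
    [Fintype (MulChar M R)] {a : M} (ha : a ≠ 1) : ∑ φ : MulChar M R, φ a = 0 := by
  obtain ⟨χ, hχ⟩ := MulChar.exists_apply_ne_one_of_hasEnoughRootsOfUnity M R ha
  refine eq_zero_of_mul_eq_self_left hχ ?_
  rw [Finset.mul_sum]
  exact Fintype.sum_bijective _ (Group.mulLeft_bijective χ) _ _ fun _ ↦ rfl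

variable [Fintype M] {f g : M → R}

lemma apply_eq_of_forall_sum_mul_mulChar_eq [CharZero R]
    [HasEnoughRootsOfUnity R (Monoid.exponent Mˣ)]
    (h : ∀ φ : MulChar M R, ∑ x, f x * φ x = ∑ x, g x * φ x) (a : Mˣ) : f a = g a := by
  let _ : Fintype (MulChar M R) := Fintype.ofFinite _
  have hinv (k : M → R) : ∑ φ : MulChar M R, φ ↑a⁻¹ * ∑ x, k x * φ x =
      Fintype.card (MulChar M R) * k a := by
    simp only [Finset.mul_sum, mul_left_comm _ (k _), ← map_mul]
    rw [Finset.sum_comm, Finset.sum_eq_single (a : M)]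
    · simp [mul_comm]
    · intro x _ hx
      rw [← Finset.mul_sum, sum_mulChar_apply_eq_zero, mul_zero]
      rwa [Ne, Units.inv_mul_eq_one, eq_comm]
    · simp
  refine mul_left_cancel₀ (Nat.cast_ne_zero.mpr (Fintype.card_ne_zero (α := MulChar M R))) ?_
  rw [← hinv, ← hinv]
  exact Finset.sum_congr rfl fun φ _ ↦ by rw [h]

lemma sum_mul_mulChar_eq_zero {t : Mˣ} (hf : ∀ x, f (t * x) = -f x) {φ : MulChar M R}
    (hφ : φ t ≠ -1) : ∑ x, f x * φ x = 0 := by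
  have hshift : ∑ x, f x * φ x = -φ t * ∑ x, f x * φ x := by
    conv_lhs => rw [← Equiv.sum_comp (Units.mulLeft t)]
    simp only [Units.mulLeft_apply, hf, map_mul, Finset.mul_sum]
    exact Finset.sum_congr rfl fun x _ ↦ by ring
  refine eq_zero_of_mul_eq_self_left (fun h ↦ hφ ?_) hshift.symm
  rw [← h, neg_neg]

end Multiplicative

lemma eq_of_forall_sum_mul_addChar_eq {F : Type*} [CommRing F] [Fintype F]
    (hF : (Fintype.card F : R) ≠ 0) {e : AddChar F R} (he : e.IsPrimitive) {f g : F → R}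
    (h : ∀ a, ∑ x, f x * e (a * x) = ∑ x, g x * e (a * x)) : f = g := by
  ext b
  have hinv (k : F → R) : ∑ a, e (a * -b) * ∑ x, k x * e (a * x) = Fintype.card F * k b := by
    simp only [Finset.mul_sum, mul_left_comm _ (k _), ← AddChar.map_add_eq_mul, ← mul_add]
    rw [Finset.sum_comm]
    simp only [← Finset.mul_sum, AddChar.sum_mulShift _ he, neg_add_eq_zero, Nat.cast_ite,
      Nat.cast_zero, mul_ite, mul_zero, Finset.sum_ite_eq, Finset.mem_univ, if_true]
    exact mul_comm _ _
  refine mul_left_cancel₀ hF ?_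
  rw [← hinv, ← hinv]
  exact Finset.sum_congr rfl fun a _ ↦ by rw [h]

end FourierUniqueness

section Autocorrelation

variable {F : Type*} [Field F] [Fintype F] {R : Type*} [CommRing R]

lemma sum_mulChar_mul_addChar_mul (φ : MulChar F R) (e : AddChar F R) {x : F} (hx : x ≠ 0) :
    ∑ b, φ b * e (b * x) = φ⁻¹ x * gaussSum φ e := by
  have hshift := gaussSum_mulShift φ e (Units.mk0 x hx)
  simp only [Units.val_mk0] at hshift
  rw [← hshift, ← mul_assoc, MulChar.inv_apply', ← map_mul, inv_mul_cancel₀ hx, map_one, one_mul]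
  simp only [gaussSum, AddChar.mulShift_apply, mul_comm x]

variable [IsDomain R] [CharZero R] {e : AddChar F R} {H : F → R} {G : R}

-- The right-hand side also covers `a = 0`, because `0⁻¹ = 0` and `H 0 = 0`.
lemma sum_mul_addChar_eq_mul_apply_inv [HasEnoughRootsOfUnity R (Monoid.exponent Fˣ)]
    (hH_zero : H 0 = 0) (hH_sum : ∑ x, H x = 0)
    (hG : ∀ φ : MulChar F R, ∑ x, H x * φ⁻¹ x ≠ 0 → gaussSum φ e = G) (a : F) :
    ∑ x, H x * e (a * x) = G * H a⁻¹ := by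
  rcases eq_or_ne a 0 with rfl | ha
  · simp [hH_zero, hH_sum]
  refine apply_eq_of_forall_sum_mul_mulChar_eq (f := fun b ↦ ∑ x, H x * e (b * x))
    (g := fun b ↦ G * H b⁻¹) (fun φ ↦ ?_) (Units.mk0 a ha)
  have hgauss (x : F) : H x * ∑ b, φ b * e (b * x) = H x * φ⁻¹ x * gaussSum φ e := by
    rcases eq_or_ne x 0 with rfl | hx
    · simp [hH_zero]
    · rw [sum_mulChar_mul_addChar_mul φ e hx, mul_assoc]
  calc ∑ b, (∑ x, H x * e (b * x)) * φ b
      = ∑ x, H x * ∑ b, φ b * e (b * x) := by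
        simp only [Finset.sum_mul, Finset.mul_sum]
        rw [Finset.sum_comm]
        exact Finset.sum_congr rfl fun x _ ↦ Finset.sum_congr rfl fun b _ ↦ by ring
    _ = (∑ x, H x * φ⁻¹ x) * gaussSum φ e := by simp only [hgauss, Finset.sum_mul]
    _ = (∑ x, H x * φ⁻¹ x) * G := by
        by_cases h : ∑ x, H x * φ⁻¹ x = 0
        · simp only [h, zero_mul]
        · rw [hG φ h]
    _ = ∑ b, G * H b⁻¹ * φ b := by
        rw [mul_comm, Finset.mul_sum, ← Equiv.sum_comp (Equiv.inv F)]
        simp only [Equiv.inv_apply, MulChar.inv_apply', inv_inv, mul_assoc]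

-- The Fourier transform of the autocorrelation of `H` is `a ↦ Ĥ(a) Ĥ(-a)`.
theorem sum_apply_add_mul_apply_self (he : e.IsPrimitive) (hH_zero : H 0 = 0)
    (hH_neg : ∀ x, H (-x) = H x) (hH_sq : ∀ x ≠ 0, H x ^ 2 = 1) (hG : G ^ 2 = Fintype.card F)
    (hH : ∀ a, ∑ x, H x * e (a * x) = G * H a⁻¹) {g : F} (hg : g ≠ 0) :
    ∑ y, H (y + g) * H y = -1 := by
  have key : (fun g ↦ ∑ y, H (y + g) * H y) =
      fun g ↦ (if g = 0 then (Fintype.card F : R) else 0) - 1 := by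
    refine eq_of_forall_sum_mul_addChar_eq (Nat.cast_ne_zero.mpr Fintype.card_ne_zero) he
      fun a ↦ ?_
    calc ∑ g, (∑ y, H (y + g) * H y) * e (a * g)
        = ∑ y, ∑ g, H (y + g) * e (a * (y + g)) * (H y * e (-a * y)) := by
          simp only [Finset.sum_mul]
          rw [Finset.sum_comm]
          refine Finset.sum_congr rfl fun y _ ↦ Finset.sum_congr rfl fun g _ ↦ ?_
          rw [show a * g = a * (y + g) + -a * y by ring, AddChar.map_add_eq_mul]
          ring
      _ = (∑ z, H z * e (a * z)) * ∑ y, H y * e (-a * y) := by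
          simp only [← Finset.sum_mul, Finset.mul_sum]
          exact Finset.sum_congr rfl fun y _ ↦ congrArg (· * _) <|
            Equiv.sum_comp (Equiv.addLeft y) fun z ↦ H z * e (a * z)
      _ = Fintype.card F * H a⁻¹ ^ 2 := by
          rw [hH, hH, inv_neg, hH_neg, ← hG]
          ring
      _ = Fintype.card F - ∑ g, e (g * a) := by
          rw [AddChar.sum_mulShift a he]
          rcases eq_or_ne a 0 with rfl | ha
          · simp [hH_zero]
          · simp [hH_sq _ (inv_ne_zero ha), ha]
      _ = ∑ g, ((if g = 0 then (Fintype.card F : R) else 0) - 1) * e (a * g) := by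
          simp [sub_mul, mul_comm a]
  simpa [hg] using congrFun key g

end Autocorrelation

section SignFunction

variable {G : Type*} [AddCommGroup G] {D : Set G}

/-- The function on an abelian group that is `1` on `D`, `-1` on the complement of `D` in the
nonzero elements, and `0` at `0`. For the set `D` of nonzero squares of a finite field of odd
order it is the quadratic character. -/
noncomputable def signFun (D : Set G) (x : G) : ℤ :=
  if x = 0 then 0 else if x ∈ D then 1 else -1

@[simp]
lemma signFun_zero : signFun D 0 = 0 := if_pos rfl

lemma signFun_of_mem {x : G} (hx : x ≠ 0) (hxD : x ∈ D) : signFun D x = 1 := by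
  rw [signFun, if_neg hx, if_pos hxD]

lemma signFun_of_notMem {x : G} (hx : x ≠ 0) (hxD : x ∉ D) : signFun D x = -1 := by
  rw [signFun, if_neg hx, if_neg hxD]

lemma signFun_sq {x : G} (hx : x ≠ 0) : signFun D x ^ 2 = 1 := by
  by_cases hxD : x ∈ D
  · rw [signFun_of_mem hx hxD, one_pow]
  · rw [signFun_of_notMem hx hxD, neg_one_sq]

lemma signFun_neg (hneg : ∀ x : G, -x ∈ D ↔ x ∈ D) (x : G) : signFun D (-x) = signFun D x := by
  simp only [signFun, neg_eq_zero, hneg]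

lemma two_mul_ite_mem (h0 : (0 : G) ∉ D) (x : G) :
    2 * (if x ∈ D then 1 else 0) = 1 - (if x = 0 then 1 else 0) + signFun D x := by
  rcases eq_or_ne x 0 with rfl | hx
  · simp [h0]
  · by_cases hxD : x ∈ D <;> simp [signFun, hx, hxD]

variable [Fintype G]

lemma natCard_sub_eq_eq_sum (g : G) :
    (Nat.card {x : G × G // x.1 ∈ D ∧ x.2 ∈ D ∧ x.1 - x.2 = g} : ℤ) =
      ∑ y, (if y + g ∈ D then 1 else 0) * (if y ∈ D then 1 else 0) := by
  let e : {x : G × G // x.1 ∈ D ∧ x.2 ∈ D ∧ x.1 - x.2 = g} ≃ {y // y + g ∈ D ∧ y ∈ D} :=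
    { toFun := fun x ↦ ⟨x.1.2, by simp [← x.2.2.2, x.2.1], x.2.2.1⟩
      invFun := fun y ↦ ⟨(y + g, y), y.2.1, y.2.2, add_sub_cancel_left _ _⟩
      left_inv := fun x ↦ Subtype.ext <| Prod.ext (by simp [← x.2.2.2]) rfl
      right_inv := fun _ ↦ rfl }
  rw [Nat.card_congr e, Nat.card_eq_fintype_card, Fintype.card_subtype]
  simp only [ite_zero_mul_ite_zero, mul_one, Finset.sum_boole]

lemma four_mul_natCard_sub_eq (h0 : (0 : G) ∉ D) (hneg : ∀ x : G, -x ∈ D ↔ x ∈ D)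
    (hsum : ∑ x, signFun D x = 0) {g : G} (hg : g ≠ 0)
    (hcorr : ∑ y, signFun D (y + g) * signFun D y = -1) :
    4 * (Nat.card {x : G × G // x.1 ∈ D ∧ x.2 ∈ D ∧ x.1 - x.2 = g} : ℤ) =
      Fintype.card G - 3 - 2 * signFun D g := by
  have hsum_shift : ∑ y, signFun D (y + g) = 0 :=
    (Equiv.sum_comp (Equiv.addRight g) (signFun D)).trans hsum
  have hterm (y : G) : 4 * ((if y + g ∈ D then 1 else 0) * (if y ∈ D then 1 else 0)) =
      1 + signFun D (y + g) + signFun D y + signFun D (y + g) * signFun D y -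
        (if y = -g then 1 + signFun D g else 0) - (if y = 0 then 1 + signFun D g else 0) := by
    have hprod := congrArg₂ (· * ·) (two_mul_ite_mem h0 (y + g)) (two_mul_ite_mem h0 y)
    simp only [← eq_neg_iff_add_eq_zero] at hprod
    rw [show (4 : ℤ) = 2 * 2 by norm_num, mul_mul_mul_comm, hprod]
    rcases eq_or_ne y 0 with rfl | hy
    · simp [hg]
    rcases eq_or_ne y (-g) with rfl | hyg
    · simp [hg, signFun_neg hneg]
    · simp only [if_neg hy, if_neg hyg]
      ring
  rw [natCard_sub_eq_eq_sum, Finset.mul_sum, Finset.sum_congr rfl fun y _ ↦ hterm y]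
  simp only [Finset.sum_sub_distrib, Finset.sum_add_distrib, hsum, hsum_shift, hcorr,
    Finset.sum_ite_eq', Finset.mem_univ, if_true, Finset.sum_const, Finset.card_univ,
    nsmul_eq_mul, mul_one]
  ring

theorem isPaleyTypePDS_of_sum_signFun_add_mul (h0 : (0 : G) ∉ D)
    (hneg : ∀ x : G, -x ∈ D ↔ x ∈ D) (hsum : ∑ x, signFun D x = 0)
    (hcorr : ∀ g ≠ 0, ∑ y, signFun D (y + g) * signFun D y = -1) : IsPaleyTypePDS D := by
  refine ⟨h0, hneg, fun g hg ↦ ?_⟩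
  have hcount := four_mul_natCard_sub_eq h0 hneg hsum hg (hcorr g hg)
  refine ⟨fun hgD ↦ ?_, fun hgD ↦ ?_⟩
  · rw [signFun_of_mem hg hgD] at hcount
    lia
  · rw [signFun_of_notMem hg hgD] at hcount
    lia

end SignFunction

section CyclotomicClasses

variable {F : Type*} [Field F] {γ : Fˣ} {N P i : ℕ}

lemma zero_notMem_cycClass : (0 : F) ∉ cycClass γ N i := fun ⟨_, h⟩ ↦ Units.ne_zero _ h.symm

lemma zpow_mem_cycClass_iff (hN : N ∣ orderOf γ) (a : ℤ) :
    ((γ ^ a : Fˣ) : F) ∈ cycClass γ N i ↔ a ≡ i [ZMOD N] := by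
  simp only [cycClass, Set.mem_ofPred_eq, Units.val_inj, zpow_eq_zpow_iff_modEq]
  constructor
  · rintro ⟨k, hk⟩
    exact (hk.of_dvd (Int.natCast_dvd_natCast.mpr hN)).trans (by simp)
  · intro h
    obtain ⟨k, hk⟩ := h.symm.dvd
    exact ⟨k, by rw [← hk, add_sub_cancel]⟩

lemma neg_mem_cycClass_iff (hN : 2 * N ∣ orderOf γ) (hγ : -1 ∈ Subgroup.zpowers γ) (x : F) :
    -x ∈ cycClass γ N i ↔ x ∈ cycClass γ N i := by
  obtain ⟨n, hn⟩ : ∃ n : ℤ, γ ^ n = -1 := hγ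
  have hn_sq : γ ^ (2 * n) = 1 := by rw [mul_comm, zpow_mul, hn, zpow_ofNat, neg_one_sq]
  obtain ⟨c, rfl⟩ : (N : ℤ) ∣ n := by
    have hdvd := (Int.natCast_dvd_natCast.mpr hN).trans (orderOf_dvd_iff_zpow_eq_one.mpr hn_sq)
    push_cast at hdvd
    exact (mul_dvd_mul_iff_left two_ne_zero).mp hdvd
  suffices h : ∀ y : F, y ∈ cycClass γ N i → -y ∈ cycClass γ N i from
    ⟨fun hx ↦ neg_neg x ▸ h _ hx, h x⟩
  rintro _ ⟨k, rfl⟩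
  refine ⟨k + c, ?_⟩
  rw [mul_add, ← add_assoc, zpow_add _ _ (N * c), hn, mul_neg_one, Units.val_neg]

-- A residue class modulo `P` splits into two classes modulo `2P`, interchanged by adding `P`.
lemma exists_add_modEq_iff_not_exists_modEq (hP : P ≠ 0) {I : Set ℕ}
    (hI : Set.BijOn (fun i : ℕ ↦ (i : ZMod P)) I Set.univ) (a : ℤ) :
    (∃ i ∈ I, a + P ≡ i [ZMOD (2 * P : ℕ)]) ↔ ¬∃ i ∈ I, a ≡ i [ZMOD (2 * P : ℕ)] := by
  obtain ⟨i, hiI, hi : (i : ZMod P) = a⟩ := hI.surjOn (Set.mem_univ (a : ZMod P))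
  have hexists (b : ℤ) (hb : (b : ZMod P) = a) :
      (∃ j ∈ I, b ≡ j [ZMOD (2 * P : ℕ)]) ↔ b ≡ i [ZMOD (2 * P : ℕ)] := by
    refine ⟨?_, fun h ↦ ⟨i, hiI, h⟩⟩
    rintro ⟨j, hj, h⟩
    have hji : j = i := hI.injOn hj hiI <| by
      have := (ZMod.intCast_eq_intCast_iff _ _ P).mpr
        (h.of_dvd (Int.natCast_dvd_natCast.mpr (dvd_mul_left P 2)))
      simpa [hi, hb] using this.symm
    exact hji ▸ h
  rw [hexists _ (by simp), hexists _ rfl]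
  obtain ⟨t, ht⟩ : (P : ℤ) ∣ i - a :=
    (ZMod.intCast_eq_intCast_iff_dvd_sub _ _ P).mp (by simp [hi])
  have hP' : (P : ℤ) ≠ 0 := Nat.cast_ne_zero.mpr hP
  rw [Int.modEq_iff_dvd, Int.modEq_iff_dvd, ← sub_sub, ht, Nat.cast_mul, mul_comm _ (P : ℤ),
    ← mul_sub_one, mul_dvd_mul_iff_left hP', mul_dvd_mul_iff_left hP', Nat.cast_ofNat]
  lia

lemma pow_mul_mem_iUnion_cycClass_iff (hP : P ≠ 0) (hN : 2 * P ∣ orderOf γ) {I : Set ℕ}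
    (hI : Set.BijOn (fun i : ℕ ↦ (i : ZMod P)) I Set.univ) {x : Fˣ}
    (hx : x ∈ Subgroup.zpowers γ) :
    ((γ ^ P * x : Fˣ) : F) ∈ ⋃ i ∈ I, cycClass γ (2 * P) i ↔
      (x : F) ∉ ⋃ i ∈ I, cycClass γ (2 * P) i := by
  obtain ⟨a, rfl⟩ := hx
  simp only [← zpow_natCast γ P, ← zpow_add, add_comm (P : ℤ), Set.mem_iUnion₂, exists_prop,
    zpow_mem_cycClass_iff hN]
  exact exists_add_modEq_iff_not_exists_modEq hP hI a

end CyclotomicClasses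

lemma signFun_units_mul {R : Type*} [Ring R] {D : Set R} {t : Rˣ}
    (ht : ∀ x : R, x ≠ 0 → (t * x ∈ D ↔ x ∉ D)) (x : R) : signFun D (t * x) = -signFun D x := by
  rcases eq_or_ne x 0 with rfl | hx
  · simp
  have htx : t * x ≠ 0 := (Units.mul_right_eq_zero t).not.mpr hx
  by_cases hxD : x ∈ D
  · rw [signFun_of_mem hx hxD, signFun_of_notMem htx (fun h ↦ (ht x hx).mp h hxD)]
  · rw [signFun_of_notMem hx hxD, signFun_of_mem htx ((ht x hx).mpr hxD), neg_neg]

section PowersOfResidues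

variable {a k p N P : ℕ}

lemma isSquare_of_isSquare_pow_of_odd {M : Type*} [CommMonoid M] {x : M} (hx : IsUnit x)
    (hk : Odd k) (h : IsSquare (x ^ k)) : IsSquare x := by
  obtain ⟨u, rfl⟩ := hx
  obtain ⟨c, rfl⟩ := hk
  have hu : (u : M) = u ^ (2 * c + 1) * ((u⁻¹ ^ c : Mˣ) : M) ^ 2 := by
    norm_cast
    rw [← pow_mul, mul_comm c 2, pow_succ', mul_assoc, ← mul_pow, mul_inv_cancel, one_pow,
      mul_one]
  rw [hu]
  exact h.mul (IsSquare.sq _)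

-- If `a ≡ b²` modulo `P`, then `a ^ P ^ n ≡ (b ^ P ^ n)²` modulo `P ^ (n + 1)`, and `P ^ n` is odd.
lemma isSquare_natCast_zmod_pow (hP : Odd P) (ha : a.Coprime P) (n : ℕ)
    (h : IsSquare (a : ZMod P)) : IsSquare (a : ZMod (P ^ n)) := by
  obtain ⟨b, hb⟩ := h
  obtain ⟨b, rfl⟩ := ZMod.intCast_surjective b
  have hdvd : (P : ℤ) ∣ a - b * b := by
    rw [← ZMod.intCast_zmod_eq_zero_iff_dvd]
    simp [hb]
  have hpow : (a : ZMod (P ^ n)) ^ P ^ n = (b ^ P ^ n) ^ 2 := by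
    have hdvd_pow : ((P ^ n : ℕ) : ℤ) ∣ a ^ P ^ n - (b * b) ^ P ^ n := by
      refine dvd_trans ?_ (dvd_sub_pow_of_dvd_sub hdvd n)
      simp [pow_succ]
    rw [← ZMod.intCast_zmod_eq_zero_iff_dvd] at hdvd_pow
    push_cast at hdvd_pow
    rw [sub_eq_zero.mp hdvd_pow, mul_pow, sq]
  exact isSquare_of_isSquare_pow_of_odd ((ZMod.isUnit_iff_coprime _ _).mpr (ha.pow_right n))
    hP.pow (hpow ▸ IsSquare.sq _)

lemma exists_pow_eq_units_sq [NeZero N] (hord : 2 * orderOf (p : ZMod N) = N.totient)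
    (hPN : P ∣ N) (y : (ZMod P)ˣ) : ∃ j, (p : ZMod P) ^ j = y ^ 2 := by
  have hpos : 0 < orderOf (p : ZMod N) := by
    have := Nat.totient_pos.mpr (NeZero.pos N)
    lia
  obtain ⟨u, hu⟩ := (orderOf_pos_iff.mp hpos).isUnit
  have hindex : (Subgroup.zpowers u).index = 2 := by
    have hcard := (Subgroup.zpowers u).card_mul_index
    rw [Nat.card_zpowers, Nat.card_eq_fintype_card, ZMod.card_units_eq_totient, ← hord, ← hu,
      orderOf_units, mul_comm 2] at hcard
    exact Nat.eq_of_mul_eq_mul_left (by rwa [← orderOf_units, hu]) hcard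
  obtain ⟨z, rfl⟩ := ZMod.unitsMap_surjective hPN y
  obtain ⟨j, hj : u ^ j = z ^ 2⟩ :=
    mem_powers_iff_mem_zpowers.mpr (Subgroup.sq_mem_of_index_two hindex z)
  refine ⟨j, ?_⟩
  have := congrArg (fun w ↦ ((ZMod.unitsMap hPN w : (ZMod P)ˣ) : ZMod P)) hj
  simpa only [map_pow, Units.val_pow_eq_pow_val, ZMod.unitsMap_val, hu, ZMod.cast_natCast hPN]
    using this

lemma exists_pow_modEq_two {p₁ m : ℕ} (hp₁ : p₁.Prime) (hp₁mod : p₁ % 8 = 7) (hN : N ≠ 0)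
    (hPN : p₁ ^ m ∣ N) (hord : 2 * orderOf (p : ZMod N) = N.totient) :
    ∃ j, p ^ j ≡ 2 [MOD p₁ ^ m] := by
  have : Fact p₁.Prime := ⟨hp₁⟩
  have : NeZero N := ⟨hN⟩
  have hodd : Odd p₁ := by
    rw [Nat.odd_iff]
    lia
  have hsq : IsSquare ((2 : ℕ) : ZMod p₁) :=
    (ZMod.exists_sq_eq_two_iff (by lia)).mpr (Or.inr hp₁mod)
  have hcop : Nat.Coprime 2 p₁ := hodd.coprime_two_left
  obtain ⟨y, hy⟩ := isSquare_natCast_zmod_pow hodd hcop m hsq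
  have hunit : IsUnit (y * y) := hy ▸ (ZMod.unitOfCoprime 2 (hcop.pow_right m)).isUnit
  obtain ⟨u, rfl⟩ := isUnit_of_mul_isUnit_left hunit
  obtain ⟨j, hj⟩ := exists_pow_eq_units_sq hord hPN u
  refine ⟨j, (ZMod.natCast_eq_natCast_iff _ _ _).mp ?_⟩
  rw [Nat.cast_pow, hj, hy, sq]

lemma dvd_pow_orderOf_mul_sub_one (hp : p ≠ 0) (s : ℕ) :
    N ∣ p ^ (orderOf (p : ZMod N) * s) - 1 := by
  rw [← ZMod.natCast_eq_zero_iff, Nat.cast_sub (Nat.one_le_pow _ _ (Nat.pos_of_ne_zero hp)),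
    Nat.cast_pow, pow_mul, pow_orderOf_eq_one, one_pow, Nat.cast_one, sub_self]

lemma four_mul_dvd_pow_orderOf_mul_sub_one (hP : Odd P) (hPN : P ∣ N) (hp : p % 4 = 1) (s : ℕ) :
    4 * P ∣ p ^ (orderOf (p : ZMod N) * s) - 1 := by
  have hp4 : 4 ∣ p - 1 := by lia
  have hpow : p - 1 ∣ p ^ (orderOf (p : ZMod N) * s) - 1 := by
    simpa using Nat.sub_dvd_pow_sub_pow p 1 _
  exact (hP.coprime_two_left.pow_left 2).mul_dvd_of_dvd_of_dvd (hp4.trans hpow)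
    (hPN.trans (dvd_pow_orderOf_mul_sub_one (by lia) s))

end PowersOfResidues

section PaleyType

variable {F : Type*} [Field F] [Fintype F] {p j P : ℕ} [CharP F p] {γ : Fˣ}

lemma gaussSum_eq_gaussSum_quadraticCharTo [Fact p.Prime] {R : Type*} [Field R]
    (hcard : (Fintype.card F : R) ≠ 0) (hp : p ≠ 2) (hP : Odd P) (hj : p ^ j ≡ 2 [MOD P])
    (hγ : ∀ x : Fˣ, x ∈ Subgroup.zpowers γ) {e : AddChar F R} (he : e.IsPrimitive)
    (hep : ∀ x, e (x ^ p) = e x) {φ : MulChar F R} (hφ : φ (γ ^ P : Fˣ) = -1) :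
    gaussSum φ e = gaussSum (quadraticCharTo F R) e := by
  set η := quadraticCharTo F R
  have hη_sq : η * η = 1 := by rw [← sq, quadraticCharTo_isQuadratic.sq_eq_one]
  have hηγ : η γ = -1 := quadraticCharTo_generator (ringChar.eq F p ▸ hp) hγ
  have hφη : (φ * η) ^ P = 1 := by
    rw [MulChar.eq_iff hγ, MulChar.pow_apply_coe, MulChar.mul_apply, MulChar.one_apply_coe,
      mul_pow, hηγ, hP.neg_one_pow, ← map_pow, ← Units.val_pow_eq_pow_val, hφ, neg_mul_neg, one_mul]
  have := gaussSum_mul_quadraticCharTo hcard hp hP hj he hep hφη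
  rwa [mul_assoc, hη_sq, mul_one] at this

theorem sum_apply_add_mul_apply_of_apply_mul_eq_neg (hq : Fintype.card F % 4 = 1) (hP : Odd P)
    (hj : p ^ j ≡ 2 [MOD P]) (hγ : ∀ x : Fˣ, x ∈ Subgroup.zpowers γ) {H : F → ℂ}
    (hH_zero : H 0 = 0) (hH_neg : ∀ x, H (-x) = H x) (hH_sq : ∀ x ≠ 0, H x ^ 2 = 1)
    (hH_sum : ∑ x, H x = 0) (hH_mul : ∀ x, H ((γ ^ P : Fˣ) * x) = -H x) {g : F} (hg : g ≠ 0) :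
    ∑ y, H (y + g) * H y = -1 := by
  have : Fact p.Prime := ⟨CharP.char_is_prime F p⟩
  have hF : ringChar F ≠ 2 := fun h ↦ by
    have := FiniteField.even_card_of_char_two h
    lia
  have hcard : (Fintype.card F : ℂ) ≠ 0 := Nat.cast_ne_zero.mpr Fintype.card_ne_zero
  obtain ⟨e, he, hep⟩ := exists_isPrimitive_forall_apply_pow_char (F := F) (p := p)
  have hfourier (a : F) :
      ∑ x, H x * e (a * x) = gaussSum (quadraticCharTo F ℂ) e * H a⁻¹ := by
    refine sum_mul_addChar_eq_mul_apply_inv hH_zero hH_sum (fun φ hφ ↦ ?_) a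
    refine gaussSum_eq_gaussSum_quadraticCharTo hcard (ringChar.eq F p ▸ hF) hP hj hγ he hep ?_
    contrapose! hφ
    refine sum_mul_mulChar_eq_zero hH_mul ?_
    rwa [Ne, MulChar.inv_apply_eq_inv, Ring.inverse_eq_inv, inv_eq_iff_eq_inv, inv_neg_one]
  have hgauss : gaussSum (quadraticCharTo F ℂ) e ^ 2 = Fintype.card F := by
    rw [gaussSum_sq (quadraticCharTo_ne_one hF) quadraticCharTo_isQuadratic he,
      quadraticCharTo_neg_one hq, one_mul]
  exact sum_apply_add_mul_apply_self he hH_zero hH_neg hH_sq hgauss hfourier hg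

theorem statement_5_general (hP : Odd P) (hj : p ^ j ≡ 2 [MOD P])
    (hq : 4 * P ∣ Fintype.card F - 1) (hγ : ∀ x : Fˣ, x ∈ Subgroup.zpowers γ) {I : Set ℕ}
    (hI : Set.BijOn (fun i : ℕ ↦ (i : ZMod P)) I Set.univ) :
    IsPaleyTypePDS (⋃ i ∈ I, cycClass γ (2 * P) i) := by
  set D : Set F := ⋃ i ∈ I, cycClass γ (2 * P) i
  have hord : orderOf γ = Fintype.card F - 1 := by
    rw [orderOf_eq_card_of_forall_mem_zpowers hγ, Nat.card_units, Nat.card_eq_fintype_card]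
  have h4P : 2 * (2 * P) ∣ orderOf γ := by rwa [hord, ← mul_assoc]
  have hq4 : Fintype.card F % 4 = 1 := by
    have h4 : 4 ∣ Fintype.card F - 1 := dvd_of_mul_right_dvd hq
    have := Fintype.card_pos (α := F)
    lia
  have h0 : (0 : F) ∉ D := by simp [D, zero_notMem_cycClass]
  have hneg (x : F) : -x ∈ D ↔ x ∈ D := by
    simp only [D, Set.mem_iUnion₂, neg_mem_cycClass_iff h4P (hγ _)]
  have hγD (x : F) : signFun D ((γ ^ P : Fˣ) * x) = -signFun D x := by
    refine signFun_units_mul (fun y hy ↦ ?_) x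
    exact pow_mul_mem_iUnion_cycClass_iff hP.pos.ne' (dvd_of_mul_left_dvd h4P) hI
      (hγ (Units.mk0 y hy))
  have hsum : ∑ x, signFun D x = 0 := by
    have := Equiv.sum_comp (Units.mulLeft (γ ^ P)) (signFun D)
    simp only [Units.mulLeft_apply, hγD, Finset.sum_neg_distrib] at this
    lia
  refine isPaleyTypePDS_of_sum_signFun_add_mul h0 hneg hsum fun g hg ↦ ?_
  have hcorr := sum_apply_add_mul_apply_of_apply_mul_eq_neg hq4 hP hj hγ
    (H := fun x ↦ (signFun D x : ℂ)) (by simp) (fun x ↦ by rw [signFun_neg hneg])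
    (fun x hx ↦ mod_cast signFun_sq hx) (mod_cast hsum) (fun x ↦ mod_cast hγD x) hg
  exact_mod_cast hcorr

end PaleyType

/-- Theorem 1.3(i) of the paper, the case `p ≡ 1 (mod 4)`. -/
theorem statement_5 (p₁ m : ℕ) (hp₁ : p₁.Prime) (hp₁mod : p₁ % 8 = 7)
    (hm : 1 ≤ m) (N : ℕ) (hN : N = 2 * p₁ ^ m)
    (p : ℕ) (hp : p.Prime) (hpmod : p % 4 = 1)
    (f : ℕ) (hf : f = orderOf ((p : ZMod N))) (hford : 2 * f = Nat.totient N)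
    (s : ℕ) (hs : Odd s) (hspos : 0 < s)
    (F : Type*) [Field F] [Fintype F] (hcard : Fintype.card F = p ^ (f * s))
    (γ : Fˣ) (hγ : ∀ x : Fˣ, x ∈ Subgroup.zpowers γ)
    (I : Finset ℕ) (hIN : ∀ i ∈ I, i < N)
    (hI : Set.BijOn (fun i : ℕ => (i : ZMod (p₁ ^ m))) ↑I Set.univ)
    (D : Set F) (hD : D = ⋃ i ∈ I, cycClass γ N i) :
    IsPaleyTypePDS D := by
  subst hN hD hf
  have : Fact p.Prime := ⟨hp⟩
  have : CharP F p := charP_of_card_eq_prime_pow hcard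
  have hP : Odd (p₁ ^ m) := Odd.pow (Nat.odd_iff.mpr (by lia))
  have hPN : p₁ ^ m ∣ 2 * p₁ ^ m := dvd_mul_left _ 2
  obtain ⟨j, hj⟩ := exists_pow_modEq_two hp₁ hp₁mod (by simp [hp₁.ne_zero]) hPN hford
  exact statement_5_general hP hj
    (hcard ▸ four_mul_dvd_pow_orderOf_mul_sub_one hP hPN hpmod s) hγ hI
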